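/- For every integer d ≥ 2 and every admissible d-tuple (a_0, ..., a_{d-1}) there exists a constant c > 0 with the following property: for all positive integers n_0, ..., n_{d-1} such that n_{i+1}^{1/2} ≤ n_i ≤ n_{i+1}^2 holds for every index i with a_i = a_{i+1} = 2/3, there exist finite sets S_0, ..., S_{d-1}, where S_i is a set of n_i distinct i-flats in R^d, such that the number of complete flags satisfies I(S_0, ..., S_{d-1}) ≥ c · Π_{i=0}^{d-1} n_i^{a_i}. -/

import Mathlib

/-!
Write points of `ℝ^d` in homogeneous coordinates `v = (1, w_0, …, w_{d-1})` and let `F_k` be the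
coordinate flat `v_j = 0` for `j > k`. Admissibility says that the nonzero entries form blocks
`1` and `(2/3, 2/3)` separated by zeros. At every index with entry `0` only flags through `F_k` are
counted, so the choices in different blocks are independent and the flag count is at least the
product of the block counts:

* a block `1` at `k` gives all `n_k` members of a pencil of `k`-flats between `F_{k-1}` and
  `F_{k+1}`;
* a block `(2/3, 2/3)` at `k, k + 1` gives the incidences of `n_k` points and `n_{k+1}` lines in the
  projective plane of flats between `F_{k-1}` and `F_{k+2}`; a grid yields at least
  `(n_k n_{k+1})^{2/3} / 64` of them (`exists_points_lines`).

All these flats, as well as the additional flats padding the sets at zero entries, belong to one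
family `flat d k (x, y, z)` with three real parameters. Injectivity of the parametrization
(`flat_injOn`) and an algebraic criterion for inclusion (`ParamLe`, `flat_le`) reduce the problem to
counting tuples of parameters (`exists_params`).
-/

open scoped Classical
noncomputable section

/-- An `i`-flat in `ℝ^d`: a nonempty affine subspace of dimension `i`. -/
def IsFlat (d i : ℕ) (f : AffineSubspace ℝ (Fin d → ℝ)) : Prop :=
  (f : Set (Fin d → ℝ)).Nonempty ∧ Module.finrank ℝ f.direction = i

/-- The number of complete flags `(f_0, …, f_{d-1})` with `f_i ∈ S i` and
`f_i ⊆ f_{i+1}`. -/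
def flagCount (d : ℕ) (S : Fin d → Finset (AffineSubspace ℝ (Fin d → ℝ))) : ℕ :=
  Set.ncard {f : Fin d → AffineSubspace ℝ (Fin d → ℝ) |
    (∀ i, f i ∈ S i) ∧ ∀ i : Fin d, ∀ h : (i : ℕ) + 1 < d, f i ≤ f ⟨(i : ℕ) + 1, h⟩}

/-- The possible exponent values `0`, `2/3`, `1`. -/
def aVal : Fin 3 → ℝ := ![0, 2/3, 1]

/-- A tuple with entries in `{0, 2/3, 1}` (encoded as `Fin 3` via `aVal`) is admissible if:
(i) no three consecutive entries are nonzero;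
(ii) every entry equal to `1` is immediately preceded and followed by `0`'s (whenever those
positions exist);
(iii) every entry equal to `2/3` is immediately preceded or followed by another `2/3`;
(iv) every entry equal to `0` is immediately preceded or followed by a nonzero entry. -/
def Admissible {d : ℕ} (a : Fin d → Fin 3) : Prop :=
  (∀ i : ℕ, ∀ h : i + 2 < d,
      ¬(a ⟨i, by omega⟩ ≠ 0 ∧ a ⟨i + 1, by omega⟩ ≠ 0 ∧ a ⟨i + 2, by omega⟩ ≠ 0)) ∧
  (∀ i : Fin d, a i = 2 →
      (∀ h : (i : ℕ) + 1 < d, a ⟨(i : ℕ) + 1, h⟩ = 0) ∧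
      (∀ _ : 1 ≤ (i : ℕ),
        a ⟨(i : ℕ) - 1, Nat.lt_of_le_of_lt (Nat.sub_le _ _) i.isLt⟩ = 0)) ∧
  (∀ i : Fin d, a i = 1 →
      (∃ h : (i : ℕ) + 1 < d, a ⟨(i : ℕ) + 1, h⟩ = 1) ∨
      (∃ _ : 1 ≤ (i : ℕ),
        a ⟨(i : ℕ) - 1, Nat.lt_of_le_of_lt (Nat.sub_le _ _) i.isLt⟩ = 1)) ∧
  (∀ i : Fin d, a i = 0 →
      (∃ h : (i : ℕ) + 1 < d, a ⟨(i : ℕ) + 1, h⟩ ≠ 0) ∨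
      (∃ _ : 1 ≤ (i : ℕ),
        a ⟨(i : ℕ) - 1, Nat.lt_of_le_of_lt (Nat.sub_le _ _) i.isLt⟩ ≠ 0))

/-! ### A three-parameter family of flats -/

/-- Homogeneous coordinates of a point `w` of `ℝ^d`: the sequence `1, w_0, …, w_{d-1}, 0, 0, …`. -/
def hom {d : ℕ} (w : Fin d → ℝ) : ℕ → ℝ
  | 0 => 1
  | j + 1 => if h : j < d then w ⟨j, h⟩ else 0

lemma hom_comb {d : ℕ} (c : ℝ) (w₁ w₂ w₃ : Fin d → ℝ) (j : ℕ) :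
    hom (c • (w₁ - w₂) + w₃) j = c * (hom w₁ j - hom w₂ j) + hom w₃ j := by
  cases j with
  | zero => simp [hom]
  | succ j =>
    by_cases h : j < d <;> simp [hom, h]

lemma hom_ext {d : ℕ} {w₁ w₂ : Fin d → ℝ} (h : ∀ j, hom w₁ j = hom w₂ j) : w₁ = w₂ := by
  ext ⟨j, hj⟩
  simpa [hom, hj] using h (j + 1)

/-- The flat with parameters `p = (x, y, z)` of dimension `k`: in homogeneous coordinates `v`, it is
cut out by `v_{k+1} = x v_k + y v_{k-1}`, `v_{k+2} = z v_k` and `v_j = 0` for `j > k + 2`.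
For `k = 0` (where `k - 1` is truncated) only `y = 0` is used. -/
def flat (d k : ℕ) (p : ℝ × ℝ × ℝ) : AffineSubspace ℝ (Fin d → ℝ) where
  carrier := {w | hom w (k + 1) = p.1 * hom w k + p.2.1 * hom w (k - 1) ∧
    hom w (k + 2) = p.2.2 * hom w k ∧ ∀ j, k + 2 < j → hom w j = 0}
  smul_vsub_vadd_mem' := by
    rintro c w₁ w₂ w₃ ⟨a₁, b₁, c₁⟩ ⟨a₂, b₂, c₂⟩ ⟨a₃, b₃, c₃⟩
    simp only [vsub_eq_sub, vadd_eq_add, Set.mem_ofPred_eq, hom_comb]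
    refine ⟨?_, ?_, fun j hj => ?_⟩
    · rw [a₁, a₂, a₃]; ring
    · rw [b₁, b₂, b₃]; ring
    · rw [c₁ j hj, c₂ j hj, c₃ j hj]; ring

lemma mem_flat {d k : ℕ} {p : ℝ × ℝ × ℝ} {w : Fin d → ℝ} : w ∈ flat d k p ↔
    hom w (k + 1) = p.1 * hom w k + p.2.1 * hom w (k - 1) ∧
    hom w (k + 2) = p.2.2 * hom w k ∧ ∀ j, k + 2 < j → hom w j = 0 := Iff.rfl

/-- The parameters for which distinct triples give distinct `k`-flats in `ℝ^d`: the coefficient of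
`v_{k-1}` vanishes when `k = 0`, and that of the equation for `v_{k+2}` vanishes when this
coordinate does not exist. -/
def Valid (d k : ℕ) (p : ℝ × ℝ × ℝ) : Prop :=
  (k = 0 → p.2.1 = 0) ∧ (d < k + 2 → p.2.2 = 0)

/-- A flat is a graph over its first `k` coordinates. -/
lemma exists_mem_flat {d k : ℕ} {p : ℝ × ℝ × ℝ} (hk : k < d) (hp : Valid d k p)
    (t : ℕ → ℝ) (ht : t 0 = 1) : ∃ w ∈ flat d k p, ∀ j ≤ k, hom w j = t j := by
  let w : Fin d → ℝ := fun j => if (j : ℕ) + 1 ≤ k then t (j + 1) else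
    if (j : ℕ) = k then p.1 * t k + p.2.1 * t (k - 1) else
    if (j : ℕ) = k + 1 then p.2.2 * t k else 0
  have hw : ∀ j ≤ k, hom w j = t j := by
    intro j hj
    cases j with
    | zero => simp [hom, ht]
    | succ j => simp only [hom, w, show j < d by omega, dif_pos, if_pos hj]
  refine ⟨w, ⟨?_, ?_, ?_⟩, hw⟩
  · rw [hw k le_rfl, hw (k - 1) (by omega)]
    simp [hom, w, hk]
  · rw [hw k le_rfl]
    by_cases h : k + 1 < d
    · simp [hom, w, h]
    · simp [hom, h, hp.2 (by omega)]
  · intro j hj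
    obtain ⟨j, rfl⟩ : ∃ i, j = i + 1 := ⟨j - 1, by omega⟩
    simp only [hom, w]
    split_ifs <;> first | rfl | omega

lemma flat_eq_of_agree {d k : ℕ} {p : ℝ × ℝ × ℝ} {w₁ w₂ : Fin d → ℝ}
    (h₁ : w₁ ∈ flat d k p) (h₂ : w₂ ∈ flat d k p) (h : ∀ j ≤ k, hom w₁ j = hom w₂ j) :
    w₁ = w₂ := by
  rw [mem_flat] at h₁ h₂
  refine hom_ext fun j => ?_
  rcases lt_trichotomy j (k + 1) with hj | rfl | hj
  · exact h j (by omega)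
  · rw [h₁.1, h₂.1, h k le_rfl, h (k - 1) (by omega)]
  · rcases (show k + 2 ≤ j by omega).eq_or_lt with rfl | hj
    · rw [h₁.2.1, h₂.2.1, h k le_rfl]
    · rw [h₁.2.2 j hj, h₂.2.2 j hj]

lemma isFlat_flat {d k : ℕ} {p : ℝ × ℝ × ℝ} (hk : k < d) (hp : Valid d k p) :
    IsFlat d k (flat d k p) := by
  obtain ⟨w, hw, -⟩ := exists_mem_flat hk hp (fun _ => 1) rfl
  refine ⟨⟨w, hw⟩, ?_⟩
  have hdir : ∀ u, u ∈ (flat d k p).direction ↔ u + w ∈ flat d k p := fun u =>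
    (AffineSubspace.vadd_mem_iff_mem_direction u hw).symm
  -- Restriction to the first `k` coordinates is an isomorphism from the direction onto `ℝ^k`.
  let φ : (flat d k p).direction →ₗ[ℝ] (Fin k → ℝ) :=
    (LinearMap.funLeft ℝ ℝ (Fin.castLE hk.le)).comp (flat d k p).direction.subtype
  have hφ : ∀ u i, φ u i = u.1 (Fin.castLE hk.le i) := fun _ _ => rfl
  have hinj : Function.Injective φ := by
    rw [injective_iff_map_eq_zero]
    rintro ⟨u, hu⟩ h
    rw [hdir] at hu
    have := flat_eq_of_agree hu hw fun j hj => by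
      cases j with
      | zero => rfl
      | succ j =>
        have h2 := congrFun h ⟨j, hj⟩
        simp only [hφ, Fin.castLE_mk, Pi.zero_apply] at h2
        simp [hom, show j < d by omega, h2]
    simpa using this
  have hsurj : Function.Surjective φ := by
    intro t
    obtain ⟨w', hw', h⟩ := exists_mem_flat hk hp
      (fun j => hom w j + if h : 1 ≤ j ∧ j ≤ k then t ⟨j - 1, by omega⟩ else 0) (by simp [hom])
    refine ⟨⟨w' - w, by rw [hdir]; simpa using hw'⟩, ?_⟩
    ext ⟨i, hi⟩
    have := h (i + 1) (by omega)
    have hid : i < d := by omega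
    simp only [hom, hid, dif_pos] at this
    simp [hφ, this, show i + 1 ≤ k from hi]
  rw [(LinearEquiv.ofBijective φ ⟨hinj, hsurj⟩).finrank_eq, Module.finrank_fin_fun]

lemma flat_injOn {d k : ℕ} {p q : ℝ × ℝ × ℝ} (hk : k < d) (hp : Valid d k p) (hq : Valid d k q)
    (h : flat d k p = flat d k q) : p = q := by
  obtain ⟨x, y, z⟩ := p
  obtain ⟨x', y', z'⟩ := q
  obtain ⟨w, hw, e⟩ := exists_mem_flat hk hp (fun _ => 1) rfl
  have hw' := hw
  rw [h] at hw'
  rw [mem_flat] at hw hw'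
  have e1 := hw.1.symm.trans hw'.1
  have e2 := hw.2.1.symm.trans hw'.2.1
  simp only [e k le_rfl, e (k - 1) (by omega), mul_one] at e1 e2
  have hy : y = y' := by
    by_cases h0 : k = 0
    · exact (hp.1 h0).trans (hq.1 h0).symm
    · obtain ⟨u, hu, f⟩ := exists_mem_flat hk hp (fun j => if j = k then 0 else 1)
        (by simp [Ne.symm h0])
      have hu' := hu
      rw [h] at hu'
      rw [mem_flat] at hu hu'
      have e3 := hu.1.symm.trans hu'.1
      simpa [f k le_rfl, f (k - 1) (by omega), show k - 1 ≠ k by omega] using e3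
  subst hy e2
  simpa using e1

/-- A sufficient condition, in terms of parameters, for a `k`-flat to lie in a `k+1`-flat. -/
def ParamLe (p q : ℝ × ℝ × ℝ) : Prop :=
  p.2.2 = q.1 * p.1 + q.2.1 ∧ q.1 * p.2.1 = 0 ∧ q.2.2 * p.1 = 0 ∧ q.2.2 * p.2.1 = 0

lemma flat_le {d k : ℕ} {p q : ℝ × ℝ × ℝ} (h : ParamLe p q) : flat d k p ≤ flat d (k + 1) q := by
  intro w hw
  obtain ⟨h1, h2, h3, h4⟩ := h
  rw [mem_flat] at hw ⊢
  obtain ⟨a, b, c⟩ := hw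
  refine ⟨?_, ?_, fun j hj => c j (by omega)⟩
  · rw [show k + 1 + 1 = k + 2 from rfl, b, a, h1, Nat.add_sub_cancel]
    linear_combination (-hom w (k - 1)) * h2
  · rw [c (k + 1 + 2) (by omega), a]
    linear_combination (-hom w k) * h3 + (-hom w (k - 1)) * h4

/-- Passage from parameters to flats: flags of parameters inject into flags of flats. -/
lemma flagCount_of_params {d : ℕ} (Q : Fin d → Finset (ℝ × ℝ × ℝ))
    (hQ : ∀ i, ∀ p ∈ Q i, Valid d i p) (G : Finset (Fin d → ℝ × ℝ × ℝ))
    (hG : ∀ g ∈ G, ∀ i, g i ∈ Q i)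
    (hR : ∀ g ∈ G, ∀ i : Fin d, ∀ h : (i : ℕ) + 1 < d, ParamLe (g i) (g ⟨i + 1, h⟩)) :
    G.card ≤ flagCount d (fun i => (Q i).image (flat d i)) := by
  have hfin : {f : Fin d → AffineSubspace ℝ (Fin d → ℝ) |
      (∀ i, f i ∈ (Q i).image (flat d i)) ∧
        ∀ i : Fin d, ∀ h : (i : ℕ) + 1 < d, f i ≤ f ⟨(i : ℕ) + 1, h⟩}.Finite :=
    (Fintype.piFinset fun i => (Q i).image (flat d i)).finite_toSet.subset fun f hf => by
      simpa [Fintype.mem_piFinset] using hf.1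
  have hinj : Set.InjOn (fun (g : Fin d → ℝ × ℝ × ℝ) (i : Fin d) => flat d i (g i)) G := by
    intro g hg g' hg' h
    ext1 i
    exact flat_injOn i.isLt (hQ i _ (hG g hg i)) (hQ i _ (hG g' hg' i)) (congrFun h i)
  rw [← Finset.card_image_of_injOn hinj, ← Set.ncard_coe_finset]
  refine Set.ncard_le_ncard ?_ hfin
  intro f hf
  simp only [Finset.coe_image, Set.mem_image, Finset.mem_coe] at hf
  obtain ⟨g, hg, rfl⟩ := hf
  exact ⟨fun i => Finset.mem_image_of_mem _ (hG g hg i), fun i h => flat_le (hR g hg i h)⟩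

/-! ### Point-line configurations in the plane -/

/-- The grid construction: `k × kl` grid points against the lines with slope in `[0, l)` and
intercept in `[0, kl)`. -/
lemma grid_incidences (k l : ℕ) : ∃ P L : Finset (ℝ × ℝ),
    P.card = k * (k * l) ∧ L.card = l * (k * l) ∧
    (k * l) ^ 2 ≤ 4 * ((P ×ˢ L).filter fun t => t.1.2 = t.2.1 * t.1.1 + t.2.2).card := by
  let ι : ℕ × ℕ ↪ ℝ × ℝ := ⟨fun t => (t.1, t.2), fun s t h => by simpa [Prod.ext_iff] using h⟩
  refine ⟨(Finset.range k ×ˢ Finset.range (k * l)).map ι,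
    (Finset.range l ×ˢ Finset.range (k * l)).map ι, by simp, by simp, ?_⟩
  -- With `2x < k` and `2b < kl`, the point `(x, ax + b)` stays inside the grid.
  have key : (Finset.range ((k + 1) / 2) ×ˢ Finset.range l ×ˢ
      Finset.range ((k * l + 1) / 2)).card ≤ _ :=
    Finset.card_le_card_of_injOn
      (t := ((((Finset.range k ×ˢ Finset.range (k * l)).map ι) ×ˢ
        ((Finset.range l ×ˢ Finset.range (k * l)).map ι)).filter
          fun t => t.1.2 = t.2.1 * t.1.1 + t.2.2))
      (fun t : ℕ × ℕ × ℕ => (ι (t.1, t.2.1 * t.1 + t.2.2), ι (t.2.1, t.2.2))) (by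
        rintro ⟨x, a, b⟩ h
        simp only [Finset.coe_product, Set.mem_prod, Finset.mem_coe, Finset.mem_range] at h
        obtain ⟨h1, h2, h3⟩ := h
        have h4 : a * (2 * x) ≤ l * k := Nat.mul_le_mul h2.le (by omega)
        have h5 : 2 * (a * x + b) < 2 * (k * l) := by
          have : 2 * b < k * l := by omega
          nlinarith
        simp only [Finset.coe_filter, Set.mem_ofPred_eq, Finset.mem_product, Finset.mem_map',
          Finset.mem_range]
        refine ⟨⟨⟨by omega, by omega⟩, h2, by omega⟩, ?_⟩
        change ((a * x + b : ℕ) : ℝ) = (a : ℝ) * x + b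
        push_cast
        ring) (by
        rintro ⟨x, a, b⟩ - ⟨x', a', b'⟩ - h
        simp only [Prod.mk.injEq, ι.injective.eq_iff] at h
        simp [h.1.1, h.2.1, h.2.2])
  simp only [Finset.card_product, Finset.card_range] at key
  refine le_trans ?_ (Nat.mul_le_mul_left 4 key)
  calc (k * l) ^ 2 = k * (l * (k * l)) := by ring
    _ ≤ (2 * ((k + 1) / 2)) * (l * (2 * ((k * l + 1) / 2))) := by
      exact Nat.mul_le_mul (by omega) (Nat.mul_le_mul_left l (by omega))
    _ = _ := by ring

/-- Sharpness of the Szemerédi–Trotter bound. -/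
lemma exists_points_lines (m n : ℕ) (hm : 0 < m) (hn : 0 < n) (h1 : n ≤ m ^ 2) (h2 : m ≤ n ^ 2) :
    ∃ P L : Finset (ℝ × ℝ), P.card = m ∧ L.card = n ∧
      (1 / 64 : ℝ) * ((m : ℝ) ^ (2 / 3 : ℝ) * (n : ℝ) ^ (2 / 3 : ℝ)) ≤
        ((P ×ˢ L).filter fun t => t.1.2 = t.2.1 * t.1.1 + t.2.2).card := by
  have hm' : (0 : ℝ) < m := by exact_mod_cast hm
  have hn' : (0 : ℝ) < n := by exact_mod_cast hn
  -- `α` and `β` solve `α²β = m`, `αβ² = n`.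
  set α : ℝ := ((m : ℝ) ^ 2 / n) ^ (1 / 3 : ℝ) with hα
  set β : ℝ := ((n : ℝ) ^ 2 / m) ^ (1 / 3 : ℝ) with hβ
  have cube : ∀ t : ℝ, 0 ≤ t → (t ^ (1 / 3 : ℝ)) ^ 3 = t := fun t ht => by
    rw [← Real.rpow_natCast, ← Real.rpow_mul ht]; norm_num
  have hα3 : α ^ 3 = (m : ℝ) ^ 2 / n := cube _ (by positivity)
  have hβ3 : β ^ 3 = (n : ℝ) ^ 2 / m := cube _ (by positivity)
  have hα1 : 1 ≤ α := Real.one_le_rpow ((one_le_div hn').2 (by exact_mod_cast h1)) (by norm_num)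
  have hβ1 : 1 ≤ β := Real.one_le_rpow ((one_le_div hm').2 (by exact_mod_cast h2)) (by norm_num)
  have hα0 : 0 < α := by linarith
  have hβ0 : 0 < β := by linarith
  have hm3 : α ^ 2 * β = m := by
    refine (pow_left_inj₀ (by positivity) hm'.le (n := 3) (by norm_num)).1 ?_
    calc (α ^ 2 * β) ^ 3 = (α ^ 3) ^ 2 * β ^ 3 := by ring
      _ = (m : ℝ) ^ 3 := by rw [hα3, hβ3]; field_simp
  have hn3 : α * β ^ 2 = n := by
    refine (pow_left_inj₀ (by positivity) hn'.le (n := 3) (by norm_num)).1 ?_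
    calc (α * β ^ 2) ^ 3 = α ^ 3 * (β ^ 3) ^ 2 := by ring
      _ = (n : ℝ) ^ 3 := by rw [hα3, hβ3]; field_simp
  have hmn : (m : ℝ) ^ (2 / 3 : ℝ) * (n : ℝ) ^ (2 / 3 : ℝ) = (α * β) ^ 2 := by
    rw [← Real.mul_rpow hm'.le hn'.le, ← hm3, ← hn3,
      show α ^ 2 * β * (α * β ^ 2) = (α * β) ^ 3 by ring, ← Real.rpow_natCast,
      ← Real.rpow_mul (by positivity), ← Real.rpow_natCast (α * β) 2]
    norm_num
  set k := ⌊α⌋₊ with hk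
  set l := ⌊β⌋₊ with hl
  have hkα : (k : ℝ) ≤ α := Nat.floor_le hα0.le
  have hlβ : (l : ℝ) ≤ β := Nat.floor_le hβ0.le
  have half : ∀ t : ℝ, 1 ≤ t → t ≤ 2 * (⌊t⌋₊ : ℝ) := fun t ht => by
    have := Nat.lt_floor_add_one t
    have h : (1 : ℝ) ≤ ⌊t⌋₊ := by exact_mod_cast (Nat.one_le_floor_iff t).2 ht
    linarith
  have hkα' : α ≤ 2 * k := half α hα1
  have hlβ' : β ≤ 2 * l := half β hβ1
  obtain ⟨P₀, L₀, hP, hL, hI⟩ := grid_incidences k l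
  have hPm : P₀.card ≤ m := by
    have : ((k * (k * l) : ℕ) : ℝ) ≤ m := by
      rw [← hm3, pow_two, mul_assoc]; push_cast; gcongr
    rw [hP]; exact_mod_cast this
  have hLn : L₀.card ≤ n := by
    have : ((l * (k * l) : ℕ) : ℝ) ≤ n := by
      rw [← hn3, show α * β ^ 2 = β * (α * β) by ring]; push_cast; gcongr
    rw [hL]; exact_mod_cast this
  obtain ⟨P, hPP, hPc⟩ := Infinite.exists_superset_card_eq P₀ m hPm
  obtain ⟨L, hLL, hLc⟩ := Infinite.exists_superset_card_eq L₀ n hLn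
  refine ⟨P, L, hPc, hLc, ?_⟩
  have hmono : ((P₀ ×ˢ L₀).filter fun t => t.1.2 = t.2.1 * t.1.1 + t.2.2).card ≤
      ((P ×ˢ L).filter fun t => t.1.2 = t.2.1 * t.1.1 + t.2.2).card :=
    Finset.card_le_card (Finset.filter_subset_filter _ (Finset.product_subset_product hPP hLL))
  have hI' : ((k : ℝ) * l) ^ 2 ≤
      4 * ((P ×ˢ L).filter fun t => t.1.2 = t.2.1 * t.1.1 + t.2.2).card := by
    exact_mod_cast hI.trans (Nat.mul_le_mul_left 4 hmono)
  have h16 : (α * β) ^ 2 ≤ (2 * k * (2 * l)) ^ 2 := by gcongr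
  rw [hmn]
  nlinarith

/-! ### Blocks of exponents and the construction -/

/-- The entries at `i` and `i + 1` form a pair `(2/3, 2/3)`. -/
def Fst (A : ℕ → Fin 3) (i : ℕ) : Prop := A i = 1 ∧ A (i + 1) = 1

/-- The entries at `i - 1` and `i` form a pair `(2/3, 2/3)`. -/
def Snd (A : ℕ → Fin 3) (i : ℕ) : Prop := 1 ≤ i ∧ Fst A (i - 1)

/-- Splitting of the exponents into blocks: a pair is attributed to its first index. -/
lemma prod_blocks (d : ℕ) (A : ℕ → Fin 3) (N : ℕ → ℕ)
    (hA : ∀ i, d ≤ i → A i = 0)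
    (h3 : ∀ i, A i = 1 → Fst A i ∨ Snd A i)
    (h12 : ∀ i, Fst A i → ¬ Snd A i) :
    ∏ i ∈ Finset.range d, (N i : ℝ) ^ aVal (A i) =
    ∏ i ∈ Finset.range d, (if Fst A i then (N i : ℝ) ^ (2 / 3 : ℝ) * (N (i + 1) : ℝ) ^ (2 / 3 : ℝ)
      else if A i = 2 then (N i : ℝ) else 1) := by
  let U : ℕ → ℝ := fun i => if Fst A i then (N i : ℝ) ^ (2 / 3 : ℝ) else
    if A i = 2 then (N i : ℝ) else 1
  let F : ℕ → ℝ := fun i => if Fst A i then (N (i + 1) : ℝ) ^ (2 / 3 : ℝ) else 1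
  let S : ℕ → ℝ := fun i => if Snd A i then (N i : ℝ) ^ (2 / 3 : ℝ) else 1
  have hSF : ∏ i ∈ Finset.range d, S i = ∏ i ∈ Finset.range d, F i := by
    cases d with
    | zero => rfl
    | succ d =>
      have hF : F d = 1 := by simp [F, Fst, hA (d + 1) le_rfl]
      rw [Finset.prod_range_succ', Finset.prod_range_succ F, hF]
      simp [S, F, Snd]
  calc _ = ∏ i ∈ Finset.range d, U i * S i := by
        refine Finset.prod_congr rfl fun i _ => ?_
        have hcases : A i = 0 ∨ A i = 1 ∨ A i = 2 := by
          generalize A i = x; revert x; decide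
        have hs : Snd A i → A i = 1 := fun ⟨hi, hf⟩ => by
          simpa [Nat.sub_add_cancel hi] using hf.2
        rcases hcases with h | h | h
        · have : ¬ Snd A i := fun hh => by simp [h] at hs; exact hs hh
          simp [U, S, Fst, h, this, aVal]
        · rcases h3 i h with hf | hf
          · simp [U, S, hf, h12 i hf, h, aVal]
          · have : ¬ Fst A i := fun hh => h12 i hh hf
            simp [U, S, hf, this, h, aVal]
        · have : ¬ Snd A i := fun hh => by simp [h] at hs; exact hs hh
          simp [U, S, Fst, h, this, aVal]
    _ = ∏ i ∈ Finset.range d, U i * F i := by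
        rw [Finset.prod_mul_distrib, hSF, Finset.prod_mul_distrib]
    _ = _ := by
        refine Finset.prod_congr rfl fun i _ => ?_
        by_cases h : Fst A i <;> simp [U, F, h]

/-- The construction on the level of parameters: zero entries contribute one fixed flat, entries
`1` contribute a pencil, and each pair `(2/3, 2/3)` contributes a planar point-line
configuration. -/
lemma exists_params (d : ℕ) (A : ℕ → Fin 3) (N : ℕ → ℕ) (hN : ∀ i, 0 < N i)
    (hA : ∀ i, d ≤ i → A i = 0)
    (h3 : ∀ i, A i = 1 → Fst A i ∨ Snd A i)
    (h12 : ∀ i, Fst A i → ¬ Snd A i)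
    (hadj : ∀ i, A i = 0 ∨ A (i + 1) = 0 ∨ Fst A i)
    (hST : ∀ i, Fst A i → N (i + 1) ≤ N i ^ 2 ∧ N i ≤ N (i + 1) ^ 2) :
    ∃ Q : ℕ → Finset (ℝ × ℝ × ℝ), (∀ i, (Q i).card = N i) ∧ (∀ i, ∀ p ∈ Q i, Valid d i p) ∧
      ∃ G : Finset (Fin d → ℝ × ℝ × ℝ), (∀ g ∈ G, ∀ i : Fin d, g i ∈ Q i) ∧
        (∀ g ∈ G, ∀ i : Fin d, ∀ h : (i : ℕ) + 1 < d, ParamLe (g i) (g ⟨i + 1, h⟩)) ∧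
        (1 / 64 : ℝ) ^ d * ∏ i ∈ Finset.range d, (N i : ℝ) ^ aVal (A i) ≤ G.card := by
  have hex : ∀ i, ∃ P L : Finset (ℝ × ℝ), Fst A i → (P.card = N i ∧ L.card = N (i + 1) ∧
      (1 / 64 : ℝ) * ((N i : ℝ) ^ (2 / 3 : ℝ) * (N (i + 1) : ℝ) ^ (2 / 3 : ℝ)) ≤
        ((P ×ˢ L).filter fun t => t.1.2 = t.2.1 * t.1.1 + t.2.2).card) := by
    intro i
    by_cases h : Fst A i
    · obtain ⟨P, L, h'⟩ := exists_points_lines (N i) (N (i + 1)) (hN _) (hN _)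
        (hST i h).1 (hST i h).2
      exact ⟨P, L, fun _ => h'⟩
    · exact ⟨∅, ∅, fun h' => absurd h' h⟩
  choose P L hPL using hex
  have hSnd : ∀ i, Snd A (i + 1) ↔ Fst A i := fun i => by simp [Snd]
  have hs1 : ∀ i, Snd A i → A i = 1 := fun i ⟨hi, hf⟩ => by
    simpa [Nat.sub_add_cancel hi] using hf.2
  let ptE : ℝ × ℝ ↪ ℝ × ℝ × ℝ := ⟨fun p => (p.1, 0, p.2), fun p q h => by
    simpa [Prod.ext_iff] using h⟩
  let lnE : ℝ × ℝ ↪ ℝ × ℝ × ℝ := ⟨fun p => (p.1, p.2, 0), fun p q h => by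
    simpa [Prod.ext_iff] using h⟩
  let pcE : ℕ ↪ ℝ × ℝ × ℝ := ⟨fun t => (t, 0, 0), fun p q h => by
    simpa [Prod.ext_iff] using h⟩
  let Q : ℕ → Finset (ℝ × ℝ × ℝ) := fun i =>
    if Fst A i then (P i).map ptE else if Snd A i then (L (i - 1)).map lnE
    else (Finset.range (N i)).map pcE
  let pairs : ℕ → Finset ((ℝ × ℝ × ℝ) × (ℝ × ℝ × ℝ)) := fun i =>
    ((P i ×ˢ L i).filter fun t => t.1.2 = t.2.1 * t.1.1 + t.2.2).map (ptE.prodMap lnE)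
  let B : ℕ → Finset ((ℝ × ℝ × ℝ) × (ℝ × ℝ × ℝ)) := fun i =>
    if Fst A i then pairs i else if A i = 2 then (Q i) ×ˢ {0} else {0}
  have hQF : ∀ i, Fst A i → Q i = (P i).map ptE := fun i h => by simp [Q, h]
  have hQS : ∀ i, Fst A i → Q (i + 1) = (L i).map lnE := fun i h => by
    have : ¬ Fst A (i + 1) := fun h' => h12 _ h' ((hSnd i).2 h)
    simp [Q, this, (hSnd i).2 h]
  have hQO : ∀ i, ¬ Fst A i → ¬ Snd A i → Q i = (Finset.range (N i)).map pcE := fun i h h' => by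
    simp [Q, h, h']
  have hBF : ∀ i, Fst A i → B i = pairs i := fun i h => by simp [B, h]
  have hB2 : ∀ i, A i = 2 → B i = Q i ×ˢ {0} := fun i h => by simp [B, Fst, h]
  have hBO : ∀ i, ¬ Fst A i → A i ≠ 2 → B i = {0} := fun i h h' => by simp [B, h, h']
  have hQcard : ∀ i, (Q i).card = N i := by
    intro i
    by_cases h : Fst A i
    · simp [hQF i h, (hPL i h).1]
    by_cases h' : Snd A i
    · obtain ⟨i, rfl⟩ : ∃ j, i = j + 1 := ⟨i - 1, by have := h'.1; omega⟩
      rw [hSnd] at h'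
      simp [hQS i h', (hPL i h').2.1]
    · simp [hQO i h h']
  have hvalid : ∀ i, ∀ p ∈ Q i, Valid d i p := by
    intro i p hp
    by_cases h : Fst A i
    · have hid : i + 1 < d := by
        by_contra hh
        have := h.2
        rw [hA _ (by omega)] at this
        exact absurd this (by decide)
      rw [hQF i h, Finset.mem_map] at hp
      obtain ⟨t, -, rfl⟩ := hp
      exact ⟨fun _ => rfl, fun h' => by omega⟩
    by_cases h' : Snd A i
    · obtain ⟨i, rfl⟩ : ∃ j, i = j + 1 := ⟨i - 1, by have := h'.1; omega⟩
      rw [hSnd] at h'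
      rw [hQS i h', Finset.mem_map] at hp
      obtain ⟨t, -, rfl⟩ := hp
      exact ⟨fun h' => by omega, fun _ => rfl⟩
    · rw [hQO i h h', Finset.mem_map] at hp
      obtain ⟨t, -, rfl⟩ := hp
      exact ⟨fun _ => rfl, fun _ => rfl⟩
  have hzero : ∀ i, ¬ Fst A i → ¬ Snd A i → (0 : ℝ × ℝ × ℝ) ∈ Q i := fun i h h' => by
    rw [hQO i h h', Finset.mem_map]
    exact ⟨0, by simpa using hN i, by change (((0 : ℕ) : ℝ), (0 : ℝ), (0 : ℝ)) = 0; simp⟩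
  let Φ : (Fin d → (ℝ × ℝ × ℝ) × (ℝ × ℝ × ℝ)) → Fin d → ℝ × ℝ × ℝ := fun b i =>
    if Snd A i then (b ⟨i - 1, by omega⟩).2 else (b i).1
  let BB := Fintype.piFinset fun i : Fin d => B i
  have hΦF : ∀ b (i : Fin d), Fst A i → Φ b i = (b i).1 := fun b i h => by
    simp [Φ, h12 i h]
  have hΦS : ∀ b (i : Fin d) (h : (i : ℕ) + 1 < d), Fst A i → Φ b ⟨i + 1, h⟩ = (b i).2 :=
    fun b i h hf => by simp [Φ, hSnd, hf]
  have hΦN : ∀ b (i : Fin d), ¬ Snd A i → Φ b i = (b i).1 := fun b i h => by simp [Φ, h]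
  have hFd : ∀ i, Fst A i → i + 1 < d := fun i h => by
    by_contra hh
    have := h.2
    rw [hA _ (by omega)] at this
    exact absurd this (by decide)
  -- A block choice is recovered from the tuple of parameters it produces.
  have hinj : Set.InjOn Φ BB := by
    intro b hb b' hb' h
    simp only [BB, Finset.mem_coe, Fintype.mem_piFinset] at hb hb'
    ext1 i
    by_cases hf : Fst A i
    · have e1 := congrFun h i
      have e2 := congrFun h ⟨i + 1, hFd i hf⟩
      rw [hΦF _ _ hf, hΦF _ _ hf] at e1
      rw [hΦS _ _ _ hf, hΦS _ _ _ hf] at e2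
      exact Prod.ext e1 e2
    · have hbi := hb i
      have hbi' := hb' i
      by_cases h2 : A i = 2
      · have e1 := congrFun h i
        have hns : ¬ Snd A i := fun hh => by
          have := hs1 _ hh
          rw [h2] at this
          exact absurd this (by decide)
        rw [hΦN _ _ hns, hΦN _ _ hns] at e1
        rw [hB2 i h2, Finset.mem_product, Finset.mem_singleton] at hbi hbi'
        exact Prod.ext e1 (hbi.2.trans hbi'.2.symm)
      · rw [hBO i hf h2, Finset.mem_singleton] at hbi hbi'
        rw [hbi, hbi']
  have hmemF : ∀ b ∈ BB, ∀ i : Fin d, Fst A i → ∃ t : (ℝ × ℝ) × (ℝ × ℝ),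
      (t.1 ∈ P i ∧ t.2 ∈ L i) ∧ t.1.2 = t.2.1 * t.1.1 + t.2.2 ∧
        b i = ((t.1.1, 0, t.1.2), (t.2.1, t.2.2, 0)) := by
    intro b hb i hf
    have := Fintype.mem_piFinset.1 hb i
    rw [hBF i hf, Finset.mem_map] at this
    obtain ⟨t, ht, he⟩ := this
    rw [Finset.mem_filter, Finset.mem_product] at ht
    exact ⟨t, ht.1, ht.2, he.symm⟩
  have hΦ0 : ∀ b ∈ BB, ∀ i : Fin d, A i = 0 → Φ b i = 0 := by
    intro b hb i h0
    have hns : ¬ Snd A i := fun hh => by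
      have := hs1 _ hh
      rw [h0] at this
      exact absurd this (by decide)
    have := Fintype.mem_piFinset.1 hb i
    rw [hBO i (by simp [Fst, h0]) (by simp [h0]), Finset.mem_singleton] at this
    rw [hΦN _ _ hns, this]; rfl
  have hΦQ : ∀ b ∈ BB, ∀ i : Fin d, Φ b i ∈ Q i := by
    intro b hb i
    by_cases hf : Fst A i
    · obtain ⟨t, ht, -, he⟩ := hmemF b hb i hf
      rw [hΦF _ _ hf, he, hQF _ hf]
      exact Finset.mem_map_of_mem ptE ht.1
    by_cases hs : Snd A i
    · obtain ⟨i, hi⟩ := i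
      obtain ⟨i, rfl⟩ : ∃ j, i = j + 1 := ⟨i - 1, by have := hs.1; simp at this; omega⟩
      rw [hSnd] at hs
      obtain ⟨t, ht, -, he⟩ := hmemF b hb ⟨i, by omega⟩ hs
      rw [hΦS b ⟨i, by omega⟩ hi hs, he]
      simp only [hQS _ hs]
      exact Finset.mem_map_of_mem lnE ht.2
    · have hbi := Fintype.mem_piFinset.1 hb i
      rw [hΦN _ _ hs]
      by_cases h2 : A i = 2
      · rw [hB2 i h2, Finset.mem_product] at hbi
        exact hbi.1
      · rw [hBO i hf h2, Finset.mem_singleton] at hbi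
        rw [hbi]
        exact hzero i hf hs
  refine ⟨Q, hQcard, hvalid, BB.image Φ, ?_, ?_, ?_⟩
  · intro g hg
    obtain ⟨b, hb, rfl⟩ := Finset.mem_image.1 hg
    exact hΦQ b hb
  · intro g hg i hi
    obtain ⟨b, hb, rfl⟩ := Finset.mem_image.1 hg
    by_cases hf : Fst A i
    · obtain ⟨t, -, ht, he⟩ := hmemF b hb i hf
      rw [hΦF _ _ hf, hΦS _ _ hi hf, he]
      simp [ParamLe, ht]
    · -- Outside a pair, one of the two flats is a fixed coordinate flat.
      have hz : (Φ b i).2.2 = 0 := by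
        have := hΦQ b hb i
        simp only [Q, hf, if_false] at this
        split_ifs at this
        all_goals
          obtain ⟨t, -, ht⟩ := Finset.mem_map.1 this
          rw [← ht]; rfl
      have hy : (Φ b ⟨i + 1, hi⟩).2.1 = 0 := by
        have := hΦQ b hb ⟨i + 1, hi⟩
        simp only [Q, hSnd, hf, if_false] at this
        split_ifs at this
        all_goals
          obtain ⟨t, -, ht⟩ := Finset.mem_map.1 this
          rw [← ht]; rfl
      rcases hadj i with h | h | h
      · have := hΦ0 b hb i h
        simp [ParamLe, this, hy]
      · have := hΦ0 b hb ⟨i + 1, hi⟩ h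
        simp [ParamLe, this, hz]
      · exact absurd h hf
  · rw [Finset.card_image_of_injOn hinj, Fintype.card_piFinset, prod_blocks d A N hA h3 h12,
      Finset.prod_range, ← Fin.prod_const, ← Finset.prod_mul_distrib]
    push_cast
    refine Finset.prod_le_prod (fun i _ => by positivity) fun i _ => ?_
    by_cases hf : Fst A i
    · rw [hBF _ hf, if_pos hf, Finset.card_map]
      exact (hPL i hf).2.2
    · rw [if_neg hf]
      by_cases h2 : A i = 2
      · rw [if_pos h2, hB2 _ h2, Finset.card_product, hQcard]
        have : (0 : ℝ) ≤ N i := by positivity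
        simp only [Finset.card_singleton, mul_one]
        linarith
      · rw [if_neg h2, hBO _ hf h2, Finset.card_singleton]
        norm_num

/-- Lower bound: for every admissible exponent tuple there is a construction of sets of
flats of any prescribed sizes (subject to the Szemerédi–Trotter range condition at the
pairs of consecutive `2/3` entries) whose flag count is at least a constant times the
corresponding product of powers. Here `a i = 1 : Fin 3` encodes the value `2/3`. -/
theorem flags_lower_bound (d : ℕ) (hd : 2 ≤ d) (a : Fin d → Fin 3) (ha : Admissible a) :
    ∃ c : ℝ, 0 < c ∧
      ∀ n : Fin d → ℕ, (∀ i, 0 < n i) →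
        (∀ i : ℕ, ∀ h : i + 1 < d,
            a ⟨i, by omega⟩ = 1 → a ⟨i + 1, h⟩ = 1 →
            Real.sqrt (n ⟨i + 1, h⟩) ≤ (n ⟨i, by omega⟩ : ℝ) ∧
              n ⟨i, by omega⟩ ≤ (n ⟨i + 1, h⟩) ^ 2) →
        ∃ S : Fin d → Finset (AffineSubspace ℝ (Fin d → ℝ)),
          (∀ i : Fin d, (S i).card = n i ∧ ∀ f ∈ S i, IsFlat d i f) ∧
          c * ∏ i, (n i : ℝ) ^ aVal (a i) ≤ (flagCount d S : ℝ) := by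
  obtain ⟨hi, hii, hiii, -⟩ := ha
  let A : ℕ → Fin 3 := fun i => if h : i < d then a ⟨i, h⟩ else 0
  have hAlt : ∀ i (h : i < d), A i = a ⟨i, h⟩ := fun i h => by simp [A, h]
  have hAge : ∀ i, d ≤ i → A i = 0 := fun i h => by simp [A, not_lt.2 h]
  have hlt : ∀ i, A i ≠ 0 → i < d := fun i h => by
    by_contra hh
    exact h (hAge i (by omega))
  have h3 : ∀ i, A i = 1 → Fst A i ∨ Snd A i := by
    intro i h
    have hd' : i < d := hlt i (by simp [h])
    rcases hiii ⟨i, hd'⟩ (by rw [← hAlt, h]) with ⟨h', e⟩ | ⟨h', e⟩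
    · exact Or.inl ⟨h, by rw [hAlt _ h', e]⟩
    · refine Or.inr ⟨h', ?_, ?_⟩
      · rw [hAlt _ (by omega)]; exact e
      · simpa [Nat.sub_add_cancel h'] using h
  have h12 : ∀ i, Fst A i → ¬ Snd A i := by
    rintro i ⟨h1, h2⟩ ⟨h', h0, -⟩
    obtain ⟨i, rfl⟩ : ∃ j, i = j + 1 := ⟨i - 1, by omega⟩
    have hd' : i + 2 < d := hlt (i + 2) (by simp [h2])
    refine hi i hd' ⟨?_, ?_, ?_⟩
    · rw [← hAlt]; simp at h0; simp [h0]
    · rw [← hAlt]; simp [h1]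
    · rw [← hAlt]; simp [h2]
  have hadj : ∀ i, A i = 0 ∨ A (i + 1) = 0 ∨ Fst A i := by
    intro i
    by_cases h0 : A i = 0
    · exact Or.inl h0
    by_cases h1 : A (i + 1) = 0
    · exact Or.inr (Or.inl h1)
    have hd' := hlt _ h1
    have c3 : ∀ x : Fin 3, x ≠ 0 → x = 1 ∨ x = 2 := by decide
    rcases c3 _ h0 with e0 | e0
    · rcases c3 _ h1 with e1 | e1
      · exact Or.inr (Or.inr ⟨e0, e1⟩)
      · have := (hii ⟨i + 1, hd'⟩ (by rw [← hAlt, e1])).2 (by simp)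
        exact absurd ((hAlt i (by omega)).trans this) h0
    · have := (hii ⟨i, by omega⟩ (by rw [← hAlt, e0])).1 hd'
      exact absurd ((hAlt _ hd').trans this) h1
  refine ⟨(1 / 64 : ℝ) ^ d, by positivity, fun n hn hST => ?_⟩
  let N : ℕ → ℕ := fun i => if h : i < d then n ⟨i, h⟩ else 1
  have hNlt : ∀ i (h : i < d), N i = n ⟨i, h⟩ := fun i h => by simp [N, h]
  have hN0 : ∀ i, 0 < N i := fun i => by
    by_cases h : i < d
    · rw [hNlt i h]; exact hn _
    · simp [N, h]
  have hST' : ∀ i, Fst A i → N (i + 1) ≤ N i ^ 2 ∧ N i ≤ N (i + 1) ^ 2 := by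
    rintro i ⟨h0, h1⟩
    have hd' : i + 1 < d := hlt _ (by simp [h1])
    obtain ⟨e1, e2⟩ := hST i hd' (by rw [← hAlt, h0]) (by rw [← hAlt, h1])
    rw [hNlt i (by omega), hNlt _ hd']
    refine ⟨?_, e2⟩
    exact_mod_cast (Real.sqrt_le_left (by positivity)).1 e1
  obtain ⟨Q, hQc, hQv, G, hGQ, hGR, hGc⟩ := exists_params d A N hN0 hAge h3 h12 hadj hST'
  refine ⟨fun i => (Q i).image (flat d i), fun i => ⟨?_, ?_⟩, ?_⟩
  · rw [Finset.card_image_of_injOn, hQc, hNlt i i.isLt]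
    intro p hp q hq h
    exact flat_injOn i.isLt (hQv i p hp) (hQv i q hq) h
  · intro f hf
    obtain ⟨p, hp, rfl⟩ := Finset.mem_image.1 hf
    exact isFlat_flat i.isLt (hQv i p hp)
  · have hcount := flagCount_of_params (fun i : Fin d => Q i) (fun i => hQv i) G hGQ hGR
    rw [Finset.prod_range] at hGc
    have hprod : ∏ i : Fin d, (N i : ℝ) ^ aVal (A i) = ∏ i, (n i : ℝ) ^ aVal (a i) :=
      Finset.prod_congr rfl fun i _ => by rw [hNlt i i.isLt, hAlt i i.isLt]
    rw [hprod] at hGc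
    exact hGc.trans (by exact_mod_cast hcount)
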